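/- Let ρ ∈ M_m ⊗ M_n be a density matrix and fix 1 ≤ k ≤ min(m,n). Then R_k(ρ) = 2·E_{R,k}(ρ) + 1, where E_{R,k}(ρ) := inf{ s ≥ 0 : there exists a density matrix σ with SN(σ) ≤ k and SN((ρ + sσ)/(1+s)) ≤ k }. -/

import Mathlib

open scoped Kronecker ComplexOrder
open Matrix

namespace Ent

variable {ι κ : Type*} [Fintype ι] [Fintype κ]

/-- Inner product ⟨v,w⟩ = Σᵢ conj(v i) * (w i) (conjugate-linear in the first argument). -/
noncomputable def vinner (v w : ι → ℂ) : ℂ := dotProduct (star v) w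

/-- An elementary (product) tensor a ⊗ b in ℂ^ι ⊗ ℂ^κ. -/
def prodVec (a : ι → ℂ) (b : κ → ℂ) : ι × κ → ℂ := fun p => a p.1 * b p.2

/-- `v` has Schmidt rank at most `k`. -/
def SchmidtRankLE (k : ℕ) (v : ι × κ → ℂ) : Prop :=
  ∃ (a : Fin k → ι → ℂ) (b : Fin k → κ → ℂ), v = ∑ i, prodVec (a i) (b i)

/-- The rank-one operator |v⟩⟨w|. -/
noncomputable def ketBra (v : ι → ℂ) (w : κ → ℂ) : Matrix ι κ ℂ :=
  Matrix.vecMulVec v (star w)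

/-- A finite family of vectors is orthonormal. -/
def Orthonormal' {N : Type*} [DecidableEq N] (v : N → ι → ℂ) : Prop :=
  ∀ i j, vinner (v i) (v j) = if i = j then 1 else 0

/-- The S(k)-norm of `X ∈ M_ι ⊗ M_κ`. -/
noncomputable def SkNorm (k : ℕ) (X : Matrix (ι × κ) (ι × κ) ℂ) : ℝ :=
  sSup { r | ∃ v w : ι × κ → ℂ, vinner v v = 1 ∧ vinner w w = 1 ∧
    SchmidtRankLE k v ∧ SchmidtRankLE k w ∧
    r = ‖vinner v (X.mulVec w)‖ }

/-- The product numerical radius r_k^⊗. -/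
noncomputable def prodRad (k : ℕ) (Y : Matrix (ι × κ) (ι × κ) ℂ) : ℝ :=
  sSup { r | ∃ v : ι × κ → ℂ, vinner v v = 1 ∧ SchmidtRankLE k v ∧
    r = ‖vinner v (Y.mulVec v)‖ }

/-- The norm ‖·‖_{γ,k}. -/
noncomputable def gammaNorm (k : ℕ) (X : Matrix (ι × κ) (ι × κ) ℂ) : ℝ :=
  sInf { r | ∃ (N : ℕ) (c : Fin N → ℂ) (v w : Fin N → (ι × κ → ℂ)),
    (∀ i, vinner (v i) (v i) = 1 ∧ vinner (w i) (w i) = 1 ∧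
      SchmidtRankLE k (v i) ∧ SchmidtRankLE k (w i)) ∧
    X = ∑ i, c i • ketBra (v i) (w i) ∧
    r = ∑ i, ‖c i‖ }

/-- `ρ` is a density matrix. -/
def IsDensity (ρ : Matrix ι ι ℂ) : Prop := ρ.PosSemidef ∧ ρ.trace = 1

/-- `ρ` has Schmidt number at most `k`: it is a convex combination of projections onto
unit vectors of Schmidt rank at most `k`. -/
def SchmidtNumLE (k : ℕ) (ρ : Matrix (ι × κ) (ι × κ) ℂ) : Prop :=
  ∃ (N : ℕ) (p : Fin N → ℝ) (v : Fin N → (ι × κ → ℂ)),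
    (∀ i, 0 ≤ p i ∧ vinner (v i) (v i) = 1 ∧ SchmidtRankLE k (v i)) ∧
    (∑ i, p i) = 1 ∧ ρ = ∑ i, p i • ketBra (v i) (v i)

/-- The robustness norm R_k on Hermitian operators. -/
noncomputable def Rk (k : ℕ) (Y : Matrix (ι × κ) (ι × κ) ℂ) : ℝ :=
  sInf { r | ∃ (c₁ c₂ : ℝ) (ρ₁ ρ₂ : Matrix (ι × κ) (ι × κ) ℂ),
    0 ≤ c₁ ∧ 0 ≤ c₂ ∧ IsDensity ρ₁ ∧ IsDensity ρ₂ ∧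
    SchmidtNumLE k ρ₁ ∧ SchmidtNumLE k ρ₂ ∧
    Y = c₁ • ρ₁ - c₂ • ρ₂ ∧ r = c₁ + c₂ }

/-- `Y` is k-block positive: ⟨v|Y|v⟩ ≥ 0 for every unit vector of Schmidt rank at most `k`. -/
def KBlockPos (k : ℕ) (Y : Matrix (ι × κ) (ι × κ) ℂ) : Prop :=
  ∀ v : ι × κ → ℂ, vinner v v = 1 → SchmidtRankLE k v →
    0 ≤ (vinner v (Y.mulVec v)).re

/-- Dual of a norm on matrices, w.r.t. the Hilbert–Schmidt inner product ⟨W,X⟩ = Tr(Wᴴ X). -/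
noncomputable def dualNormM (f : Matrix ι κ ℂ → ℝ) (X : Matrix ι κ ℂ) : ℝ :=
  sSup { r | ∃ W : Matrix ι κ ℂ, f W ≤ 1 ∧ r = ‖(Wᴴ * X).trace‖ }

/-- Dual of a norm, computed in the real Hilbert space of Hermitian matrices with the
Hilbert–Schmidt inner product ⟨W,Y⟩ = Tr(WY). -/
noncomputable def dualNormHerm (f : Matrix ι ι ℂ → ℝ) (Y : Matrix ι ι ℂ) : ℝ :=
  sSup { r | ∃ W : Matrix ι ι ℂ, W.IsHermitian ∧ f W ≤ 1 ∧ r = |((W * Y).trace).re| }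

/-- The Frobenius norm of a matrix. -/
noncomputable def frobNorm (X : Matrix ι κ ℂ) : ℝ :=
  Real.sqrt (∑ i, ∑ j, Complex.normSq (X i j))

/-- The (k,2)-norm: ‖X‖_{(k,2)} = sup { |Tr(XY)| : rank Y ≤ k, ‖Y‖_F ≤ 1 }. -/
noncomputable def kNorm (k : ℕ) (X : Matrix ι κ ℂ) : ℝ :=
  sSup { r | ∃ Y : Matrix κ ι ℂ, Y.rank ≤ k ∧ frobNorm Y ≤ 1 ∧
    r = ‖(X * Y).trace‖ }

/-- The trace norm: the sum of the singular values, i.e. of the square roots of the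
eigenvalues of Xᴴ X. -/
noncomputable def traceNorm [DecidableEq κ] (X : Matrix ι κ ℂ) : ℝ :=
  ∑ i, Real.sqrt ((Matrix.isHermitian_conjTranspose_mul_self X).eigenvalues i)

/-- The s(k) vector norm: sup of |⟨u,w⟩| over unit vectors u of Schmidt rank at most k. -/
noncomputable def skVecNorm (k : ℕ) (w : ι × κ → ℂ) : ℝ :=
  sSup { r | ∃ u : ι × κ → ℂ, vinner u u = 1 ∧ SchmidtRankLE k u ∧
    r = ‖vinner u w‖ }

/-- Dual of a norm on vectors. -/
noncomputable def dualNormV (f : (ι × κ → ℂ) → ℝ) (v : ι × κ → ℂ) : ℝ :=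
  sSup { r | ∃ w : ι × κ → ℂ, f w ≤ 1 ∧ r = ‖vinner w v‖ }

/-- The realignment map, L(X)_{(i,k),(j,l)} = X_{(i,j),(k,l)}. -/
def realign {m n : ℕ} (X : Matrix (Fin m × Fin n) (Fin m × Fin n) ℂ) :
    Matrix (Fin m × Fin m) (Fin n × Fin n) ℂ :=
  fun p q => X (p.1, q.1) (p.2, q.2)

/-- The projective tensor norm on M_{m,n} ⊗ M_{m,n}. -/
noncomputable def projNorm {m n : ℕ} (Z : Matrix (Fin m × Fin m) (Fin n × Fin n) ℂ) : ℝ :=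
  sInf { r | ∃ (N : ℕ) (A B : Fin N → Matrix (Fin m) (Fin n) ℂ),
    Z = ∑ i, A i ⊗ₖ B i ∧ r = ∑ i, traceNorm (A i) * traceNorm (B i) }


/-- The robustness of Schmidt number `k`: the least `s ≥ 0` such that mixing `ρ` with `s` parts
of some state of Schmidt number at most `k` yields a state of Schmidt number at most `k`. -/
noncomputable def ERk {ι κ : Type*} [Fintype ι] [Fintype κ] (k : ℕ)
    (ρ : Matrix (ι × κ) (ι × κ) ℂ) : ℝ :=
  sInf { s : ℝ | 0 ≤ s ∧ ∃ τ : Matrix (ι × κ) (ι × κ) ℂ, IsDensity τ ∧ SchmidtNumLE k τ ∧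
    SchmidtNumLE k ((1 + s)⁻¹ • (ρ + s • τ)) }

/-- Cone of nonnegative combinations, with total weight `t`. -/
def InCone (k : ℕ) (t : ℝ) (A : Matrix (ι × κ) (ι × κ) ℂ) : Prop :=
  ∃ (N : ℕ) (p : Fin N → ℝ) (v : Fin N → (ι × κ → ℂ)),
    (∀ i, 0 ≤ p i ∧ vinner (v i) (v i) = 1 ∧ SchmidtRankLE k (v i)) ∧
    (∑ i, p i) = t ∧ A = ∑ i, p i • ketBra (v i) (v i)

lemma InCone.add {k : ℕ} {t s : ℝ} {A B : Matrix (ι × κ) (ι × κ) ℂ}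
    (hA : InCone k t A) (hB : InCone k s B) : InCone k (t + s) (A + B) := by
  obtain ⟨N, p, v, h, rfl, rfl⟩ := hA
  obtain ⟨M, q, w, h', rfl, rfl⟩ := hB
  refine ⟨N + M, Fin.append p q, Fin.append v w, ?_, ?_, ?_⟩
  · intro i
    refine Fin.addCases (fun i => ?_) (fun i => ?_) i
    · simpa using h i
    · simpa using h' i
  · simp [Fin.sum_univ_add]
  · simp [Fin.sum_univ_add]

lemma InCone.smul {k : ℕ} {t c : ℝ} (hc : 0 ≤ c) {A : Matrix (ι × κ) (ι × κ) ℂ}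
    (hA : InCone k t A) : InCone k (c * t) (c • A) := by
  obtain ⟨N, p, v, h, rfl, rfl⟩ := hA
  refine ⟨N, fun i => c * p i, v, fun i => ⟨mul_nonneg hc (h i).1, (h i).2⟩, ?_, ?_⟩
  · rw [Finset.mul_sum]
  · simp only [Finset.smul_sum, mul_smul]

lemma InCone.zero {k : ℕ} : InCone k 0 (0 : Matrix (ι × κ) (ι × κ) ℂ) :=
  ⟨0, fun _ => 0, fun _ => 0, fun i => i.elim0, by simp, by simp⟩

lemma InCone.nonneg {k : ℕ} {t : ℝ} {A : Matrix (ι × κ) (ι × κ) ℂ}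
    (hA : InCone k t A) : 0 ≤ t := by
  obtain ⟨N, p, v, h, rfl, rfl⟩ := hA
  exact Finset.sum_nonneg fun i _ => (h i).1

lemma trace_ketBra (v : ι → ℂ) : (ketBra v v).trace = vinner v v := by
  simp [ketBra, vinner, Matrix.trace_vecMulVec, dotProduct_comm]

lemma vinner_self_eq (v : ι → ℂ) : vinner v v = ((∑ i, ‖v i‖ ^ 2 : ℝ) : ℂ) := by
  simp [vinner, dotProduct, Complex.conj_mul']

lemma SchmidtRankLE.smul {k : ℕ} {v : ι × κ → ℂ} (hv : SchmidtRankLE k v) (c : ℂ) :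
    SchmidtRankLE k (c • v) := by
  obtain ⟨a, b, rfl⟩ := hv
  refine ⟨fun i => c • a i, b, ?_⟩
  ext x
  simp [prodVec, Finset.mul_sum, mul_assoc]

lemma inCone_ketBra {k : ℕ} {v : ι × κ → ℂ} (hv : SchmidtRankLE k v) :
    ∃ t, InCone k t (ketBra v v) := by
  set r : ℝ := ∑ i, ‖v i‖ ^ 2 with hr
  have hr0 : 0 ≤ r := Finset.sum_nonneg fun i _ => by positivity
  have hvr : vinner v v = (r : ℂ) := vinner_self_eq v
  rcases hr0.eq_or_lt with h | h
  · have hz : v = 0 := by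
      ext i
      have := (Finset.sum_eq_zero_iff_of_nonneg
        (fun i _ => by positivity : ∀ i ∈ Finset.univ, 0 ≤ ‖v i‖ ^ 2)).1 (hr ▸ h.symm) i
        (Finset.mem_univ i)
      simpa using this
    refine ⟨0, ?_⟩
    have : ketBra v v = 0 := by rw [hz]; ext; simp [ketBra, vecMulVec]
    rw [this]; exact InCone.zero
  · set c : ℂ := (((Real.sqrt r)⁻¹ : ℝ) : ℂ) with hc
    have hcc : c * c * r = 1 := by
      rw [hc]
      norm_cast
      have := Real.mul_self_sqrt hr0
      have h0 : Real.sqrt r ≠ 0 := (Real.sqrt_pos.2 h).ne'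
      field_simp
      rw [sq, this]
    have hcs : star c = c := by rw [hc]; exact Complex.conj_ofReal _
    refine ⟨r, 1, fun _ => r, fun _ => c • v, fun _ => ⟨hr0, ?_, hv.smul c⟩, by simp, ?_⟩
    · have : vinner (c • v) (c • v) = c * c * vinner v v := by
        simp only [vinner, star_smul, smul_dotProduct, dotProduct_smul, smul_eq_mul, hcs]; ring
      rw [this, hvr, hcc]
    · simp only [Finset.univ_unique, Finset.sum_const, Finset.card_singleton, one_smul]
      ext x y
      simp only [ketBra, vecMulVec_apply, Matrix.smul_apply, Pi.smul_apply, star_smul, hcs,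
        smul_eq_mul, Complex.real_smul]
      linear_combination (-(v x * star v y)) * hcc

lemma ketBra_isHermitian (v : ι → ℂ) : (ketBra v v)ᴴ = ketBra v v := by
  ext i j; simp [ketBra, vecMulVec_apply, mul_comm]

lemma schmidtNumLE_isDensity {k : ℕ} {A : Matrix (ι × κ) (ι × κ) ℂ}
    (h : SchmidtNumLE k A) : IsDensity A := by
  obtain ⟨N, p, v, h, hs, rfl⟩ := h
  constructor
  · refine Matrix.posSemidef_sum _ fun i _ => ?_
    exact (Matrix.posSemidef_vecMulVec_self_star (v i)).smul (h i).1
  · rw [Matrix.trace_sum]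
    simp only [Matrix.trace_smul, trace_ketBra, (h _).2.1, Complex.real_smul, mul_one]
    rw [← Complex.ofReal_sum, hs, Complex.ofReal_one]

lemma schmidtRankLE_prodVec {k : ℕ} (hk : 1 ≤ k) (a : ι → ℂ) (b : κ → ℂ) :
    SchmidtRankLE k (prodVec a b) := by
  obtain ⟨k, rfl⟩ : ∃ l, k = l + 1 := ⟨k - 1, by omega⟩
  refine ⟨fun i => if i = 0 then a else 0, fun _ => b, ?_⟩
  rw [Fin.sum_univ_succ]
  ext x
  simp [prodVec, Fin.succ_ne_zero]

/-- The set of product projections. -/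
def prodProj (ι κ : Type*) [Fintype ι] [Fintype κ] : Set (Matrix (ι × κ) (ι × κ) ℂ) :=
  Set.range fun x : (ι → ℂ) × (κ → ℂ) => ketBra (prodVec x.1 x.2) (prodVec x.1 x.2)

lemma mem_span1 (a a' : ι → ℂ) (b : κ → ℂ) :
    ketBra (prodVec a b) (prodVec a' b) ∈ Submodule.span ℂ (prodProj ι κ) := by
  have key : ketBra (prodVec a b) (prodVec a' b) = (1/4 : ℂ) • ∑ t : Fin 4,
      (Complex.I ^ (t : ℕ)) • ketBra (prodVec (a + (Complex.I ^ (t : ℕ)) • a') b)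
        (prodVec (a + (Complex.I ^ (t : ℕ)) • a') b) := by
    ext x y
    simp [ketBra, vecMulVec_apply, prodVec, Fin.sum_univ_four, pow_succ]
    ring_nf
    simp [Complex.I_sq, Complex.I_pow_four]
    try ring
  rw [key]
  refine Submodule.smul_mem _ _ (Submodule.sum_mem _ fun t _ => Submodule.smul_mem _ _ ?_)
  exact Submodule.subset_span ⟨(_, _), rfl⟩

lemma mem_span2 (a a' : ι → ℂ) (b b' : κ → ℂ) :
    ketBra (prodVec a b) (prodVec a' b') ∈ Submodule.span ℂ (prodProj ι κ) := by
  have key : ketBra (prodVec a b) (prodVec a' b') = (1/4 : ℂ) • ∑ t : Fin 4,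
      (Complex.I ^ (t : ℕ)) • ketBra (prodVec a (b + (Complex.I ^ (t : ℕ)) • b'))
        (prodVec a' (b + (Complex.I ^ (t : ℕ)) • b')) := by
    ext x y
    simp [ketBra, vecMulVec_apply, prodVec, Fin.sum_univ_four, pow_succ]
    ring_nf
    simp [Complex.I_sq, Complex.I_pow_four]
    try ring
  rw [key]
  exact Submodule.smul_mem _ _ (Submodule.sum_mem _ fun t _ => Submodule.smul_mem _ _
    (mem_span1 _ _ _))

lemma mem_span [DecidableEq ι] [DecidableEq κ] (Y : Matrix (ι × κ) (ι × κ) ℂ) :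
    Y ∈ Submodule.span ℂ (prodProj ι κ) := by
  rw [Matrix.matrix_eq_sum_single Y]
  refine Submodule.sum_mem _ fun x _ => Submodule.sum_mem _ fun y _ => ?_
  have : Matrix.single x y (Y x y) = Y x y • ketBra
      (prodVec (Pi.single x.1 1) (Pi.single x.2 1))
      (prodVec (Pi.single y.1 1) (Pi.single y.2 1)) := by
    ext ⟨u, u'⟩ ⟨w, w'⟩
    obtain ⟨x, x'⟩ := x
    obtain ⟨y, y'⟩ := y
    by_cases h1 : u = x <;> by_cases h2 : u' = x' <;> by_cases h3 : w = y <;>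
      by_cases h4 : w' = y' <;>
      simp [ketBra, vecMulVec_apply, prodVec, Matrix.single_apply, Pi.single_apply, h1, h2, h3, h4,
        eq_comm]
  rw [this]
  exact Submodule.smul_mem _ _ (mem_span2 _ _ _ _)

lemma exists_decomp {k : ℕ} (hk : 1 ≤ k) (Y : Matrix (ι × κ) (ι × κ) ℂ) :
    ∀ c : ℂ, ∃ t s A B, InCone k t A ∧ InCone k s B ∧ c • Y + star c • Yᴴ = A - B := by
  classical
  refine Submodule.span_induction (p := fun Y _ => ∀ c : ℂ, ∃ t s A B, InCone k t A ∧
    InCone k s B ∧ c • Y + star c • Yᴴ = A - B) ?_ ?_ ?_ ?_ (mem_span Y)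
  · rintro _ ⟨⟨a, b⟩, rfl⟩ c
    obtain ⟨t, ht⟩ := inCone_ketBra (schmidtRankLE_prodVec (k := k) hk a b)
    have e : c • ketBra (prodVec a b) (prodVec a b) + star c • (ketBra (prodVec a b)
      (prodVec a b))ᴴ = (2 * c.re) • ketBra (prodVec a b) (prodVec a b) := by
      rw [ketBra_isHermitian, ← add_smul]
      have : c + star c = ((2 * c.re : ℝ) : ℂ) := by
        rw [← Complex.add_conj]; rfl
      rw [this]; rfl
    simp only [e]
    rcases le_total 0 (2 * c.re) with h | h
    · exact ⟨_, _, _, _, ht.smul h, InCone.zero, by simp⟩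
    · exact ⟨_, _, _, _, InCone.zero, ht.smul (neg_nonneg.2 h), by simp⟩
  · intro c
    exact ⟨_, _, _, _, InCone.zero, InCone.zero, by simp⟩
  · intro X Z _ _ hX hZ c
    obtain ⟨t, s, A, B, hA, hB, e⟩ := hX c
    obtain ⟨t', s', A', B', hA', hB', e'⟩ := hZ c
    refine ⟨_, _, _, _, hA.add hA', hB.add hB', ?_⟩
    rw [conjTranspose_add, smul_add, smul_add, add_sub_add_comm, ← e, ← e']
    abel
  · intro d X _ hX c
    obtain ⟨t, s, A, B, hA, hB, e⟩ := hX (c * d)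
    refine ⟨_, _, _, _, hA, hB, ?_⟩
    rw [← e, conjTranspose_smul, smul_smul, smul_smul, star_mul']

lemma InCone.exists_schmidtNumLE {k : ℕ} {t : ℝ} {A S : Matrix (ι × κ) (ι × κ) ℂ}
    (hS : SchmidtNumLE k S) (hA : InCone k t A) :
    ∃ B, SchmidtNumLE k B ∧ A = t • B := by
  rcases hA.nonneg.eq_or_lt with h | h
  · refine ⟨S, hS, ?_⟩
    obtain ⟨N, p, v, h', hs, rfl⟩ := hA
    subst h
    have := (Finset.sum_eq_zero_iff_of_nonneg (fun i _ => (h' i).1)).1 hs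
    rw [zero_smul]
    exact Finset.sum_eq_zero fun i hi => by rw [this i hi, zero_smul]
  · refine ⟨t⁻¹ • A, ?_, ?_⟩
    · have := hA.smul (inv_nonneg.2 h.le)
      rwa [inv_mul_cancel₀ h.ne'] at this
    · rw [smul_smul, mul_inv_cancel₀ h.ne', one_smul]

/-- for a density matrix `ρ`, `R_k(ρ) = 2·E_{R,k}(ρ) + 1`. -/
theorem Rk_eq_two_ERk_add_one {m n k : ℕ} (hk1 : 1 ≤ k) (hk : k ≤ min m n)
    (ρ : Matrix (Fin m × Fin n) (Fin m × Fin n) ℂ) (hρ : IsDensity ρ) :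
    Rk k ρ = 2 * ERk k ρ + 1 := by
  set E : Set ℝ := { s : ℝ | 0 ≤ s ∧ ∃ τ : Matrix (Fin m × Fin n) (Fin m × Fin n) ℂ,
    IsDensity τ ∧ SchmidtNumLE k τ ∧
    SchmidtNumLE k ((1 + s)⁻¹ • (ρ + s • τ)) } with hE
  have hc : ∀ (c₁ c₂ : ℝ) (ρ₁ ρ₂ : Matrix (Fin m × Fin n) (Fin m × Fin n) ℂ),
      0 ≤ c₂ → SchmidtNumLE k ρ₁ → SchmidtNumLE k ρ₂ →
      ρ = c₁ • ρ₁ - c₂ • ρ₂ → c₁ = 1 + c₂ ∧ c₂ ∈ E := by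
    intro c₁ c₂ ρ₁ ρ₂ h2 hs1 hs2 e
    have d1 := schmidtNumLE_isDensity hs1
    have d2 := schmidtNumLE_isDensity hs2
    have ht : c₁ = 1 + c₂ := by
      have := congrArg Matrix.trace e
      rw [hρ.2, trace_sub, trace_smul, trace_smul, d1.2, d2.2] at this
      have := congrArg Complex.re this
      simp at this
      linarith
    refine ⟨ht, h2, ρ₂, d2, hs2, ?_⟩
    have h0 : (1 + c₂) ≠ 0 := by positivity
    rw [e, sub_add_cancel, ht, smul_smul, inv_mul_cancel₀ h0, one_smul]
    exact hs1
  have hset : { r | ∃ (c₁ c₂ : ℝ) (ρ₁ ρ₂ : Matrix (Fin m × Fin n) (Fin m × Fin n) ℂ),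
    0 ≤ c₁ ∧ 0 ≤ c₂ ∧ IsDensity ρ₁ ∧ IsDensity ρ₂ ∧
    SchmidtNumLE k ρ₁ ∧ SchmidtNumLE k ρ₂ ∧
    ρ = c₁ • ρ₁ - c₂ • ρ₂ ∧ r = c₁ + c₂ } = (fun s : ℝ => 2 * s + 1) '' E := by
    ext r
    constructor
    · rintro ⟨c₁, c₂, ρ₁, ρ₂, h1, h2, d1, d2, hs1, hs2, e, rfl⟩
      obtain ⟨ht, hm⟩ := hc c₁ c₂ ρ₁ ρ₂ h2 hs1 hs2 e
      exact ⟨c₂, hm, by simp only [ht]; ring⟩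
    · rintro ⟨s, ⟨hs, τ, dτ, hτ, h⟩, rfl⟩
      have h0 : (1 + s) ≠ 0 := by positivity
      refine ⟨1 + s, s, _, τ, by positivity, hs, schmidtNumLE_isDensity h, dτ, h, hτ, ?_, by ring⟩
      rw [smul_smul, mul_inv_cancel₀ h0, one_smul, add_sub_cancel_right]
  have hne : E.Nonempty := by
    have hm : 0 < m := by have := hk.trans (min_le_left m n); omega
    have hn : 0 < n := by have := hk.trans (min_le_right m n); omega
    obtain ⟨S, hS⟩ : ∃ S : Matrix (Fin m × Fin n) (Fin m × Fin n) ℂ, SchmidtNumLE k S := by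
      refine ⟨_, 1, fun _ => 1, fun _ => prodVec (Pi.single ⟨0, hm⟩ 1) (Pi.single ⟨0, hn⟩ 1),
        fun _ => ⟨zero_le_one, ?_, schmidtRankLE_prodVec hk1 _ _⟩, by simp, rfl⟩
      simp [vinner, dotProduct, prodVec, Fintype.sum_prod_type, Pi.single_apply]
    obtain ⟨t, s, A, B, hA, hB, e⟩ := exists_decomp hk1 ρ (1 / 2)
    obtain ⟨A', hA', rfl⟩ := hA.exists_schmidtNumLE hS
    obtain ⟨B', hB', rfl⟩ := hB.exists_schmidtNumLE hS
    rw [hρ.1.isHermitian.eq, ← add_smul] at e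
    have h1 : ((1 / 2 : ℂ) + star (1 / 2 : ℂ)) = 1 := by
      simp; norm_num
    rw [h1, one_smul] at e
    exact ⟨s, (hc t s A' B' hB.nonneg hA' hB' e).2⟩
  have hbdd : BddBelow E := ⟨0, fun s hs => hs.1⟩
  have hmono : Monotone (fun s : ℝ => 2 * s + 1) := fun a b h => by
    simp only; linarith
  unfold Rk ERk
  rw [hset]
  exact (hmono.map_csInf_of_continuousAt (by fun_prop) hne hbdd).symm

end Ent
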